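/- Consider a sequence indexed by n of noise-free models Y⁽ⁿ⁾ = X⁽ⁿ⁾β⁽ⁿ⁾ with X⁽ⁿ⁾ an n×p⁽ⁿ⁾ matrix with unit-norm columns and p⁽ⁿ⁾ → ∞, where β⁽ⁿ⁾ has iid coordinates with law (1−ε_n)ν₀ + ε_n π_n, ε_n ∈ (0,1). Let N*_n(C) = max_{1≤i≤p} #{j ≠ i : C_{ij} ≠ 0}. Suppose: (i) there is c₃ > 0 with liminf_n [ −log(ε_n N*_n(C)) / log(p⁽ⁿ⁾) ] ≥ c₃; (ii) there are a_n > 0 and c₄ ≥ 1 such that for sufficiently large n the support of π_n is contained in [−c₄ a_n, −a_n] ∪ [a_n, c₄ a_n]; and (iii) there is δ > 0 with max_{i≠j} |C_{ij}| ≤ δ and δ < c₃/(2 c₄). Then A_n(a_n/2, ε_n, ḡ⁽ⁿ⁾) → 0 as n → ∞, i.e., Condition F'' holds. -/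

import Mathlib

open Matrix MeasureTheory ProbabilityTheory Filter Topology

/-- `g_{ij}(t) = E_{u∼π}[exp(t u ⟨x_i, x_j⟩)] − 1`, where `x_i, x_j` are columns of `X`. -/
noncomputable def gfun {n p : ℕ} (X : Matrix (Fin n) (Fin p) ℝ) (π : Measure ℝ)
    (i j : Fin p) (t : ℝ) : ℝ :=
  (∫ u, Real.exp (t * u * ∑ k, X k i * X k j) ∂π) - 1

/-- `ḡ_i(t) = Σ_{j ≠ i} g_{ij}(t)`. -/
noncomputable def gbar {n p : ℕ} (X : Matrix (Fin n) (Fin p) ℝ) (π : Measure ℝ)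
    (i : Fin p) (t : ℝ) : ℝ :=
  ∑ j ∈ Finset.univ.erase i, gfun X π i j t

/-- `A(δ, ε, ḡ) = inf_{t > 0} e^{−δt} Σ_i [exp(ε ḡ_i(t)) + exp(ε ḡ_i(−t))]`. -/
noncomputable def Afun {n p : ℕ} (X : Matrix (Fin n) (Fin p) ℝ) (π : Measure ℝ)
    (δ ε : ℝ) : ℝ :=
  sInf ((fun t => Real.exp (-(δ * t)) *
    ∑ i, (Real.exp (ε * gbar X π i t) + Real.exp (ε * gbar X π i (-t)))) '' Set.Ioi 0)

/-- `N*_n(C) = max_i #{j ≠ i : C_ij ≠ 0}`, the maximal number of nonzero off-diagonal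
entries in a row of the Gram matrix `C = XᵀX`. -/
noncomputable def Nstar {n p : ℕ} (X : Matrix (Fin n) (Fin p) ℝ) : ℕ :=
  Finset.univ.sup fun i : Fin p =>
    ((Finset.univ.erase i).filter fun j => (Xᵀ * X) i j ≠ 0).card

lemma aux_gfun_le {n p : ℕ} (X : Matrix (Fin n) (Fin p) ℝ) (π : Measure ℝ)
    [IsProbabilityMeasure π] (i j : Fin p) (t M δ K : ℝ)
    (hM : ∀ᵐ u ∂π, |u| ≤ M) (hC : |(Xᵀ * X) i j| ≤ δ) (hK : |t| * M * δ ≤ K) :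
    gfun X π i j t ≤ if (Xᵀ * X) i j ≠ 0 then Real.exp K else 0 := by
  have hC' : (Xᵀ * X) i j = ∑ k, X k i * X k j := by
    simp [Matrix.mul_apply]
  unfold gfun
  rw [← hC']
  split_ifs with h
  · have h1 : ‖∫ u, Real.exp (t * u * (Xᵀ * X) i j) ∂π‖ ≤ Real.exp K * π.real Set.univ := by
      apply norm_integral_le_of_norm_le_const
      filter_upwards [hM] with u hu
      rw [Real.norm_eq_abs, Real.abs_exp, Real.exp_le_exp]
      refine (le_abs_self _).trans (le_trans ?_ hK)
      rw [abs_mul, abs_mul]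
      have h0 : 0 ≤ M := (abs_nonneg u).trans hu
      gcongr
    have h2 := (le_abs_self _).trans h1
    simp only [probReal_univ, mul_one] at h2
    linarith
  · rw [not_not] at h
    simp [h]

lemma aux_gbar_le {n p : ℕ} (X : Matrix (Fin n) (Fin p) ℝ) (π : Measure ℝ)
    [IsProbabilityMeasure π] (i : Fin p) (t M δ K : ℝ)
    (hM : ∀ᵐ u ∂π, |u| ≤ M) (hC : ∀ i j, i ≠ j → |(Xᵀ * X) i j| ≤ δ)
    (hK : |t| * M * δ ≤ K) :
    gbar X π i t ≤ (Nstar X : ℝ) * Real.exp K := by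
  unfold gbar
  have h1 : ∑ j ∈ Finset.univ.erase i, gfun X π i j t
      ≤ ∑ j ∈ Finset.univ.erase i, if (Xᵀ * X) i j ≠ 0 then Real.exp K else 0 := by
    apply Finset.sum_le_sum
    intro j hj
    exact aux_gfun_le X π i j t M δ K hM (hC i j (Finset.ne_of_mem_erase hj).symm) hK
  refine h1.trans ?_
  rw [← Finset.sum_filter, Finset.sum_const, nsmul_eq_mul]
  have h2 : ((Finset.univ.erase i).filter fun j => (Xᵀ * X) i j ≠ 0).card ≤ Nstar X :=
    Finset.le_sup (f := fun i : Fin p =>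
      ((Finset.univ.erase i).filter fun j => (Xᵀ * X) i j ≠ 0).card) (Finset.mem_univ i)
  have h3 : (((Finset.univ.erase i).filter fun j => (Xᵀ * X) i j ≠ 0).card : ℝ)
      ≤ (Nstar X : ℝ) := by exact_mod_cast h2
  exact mul_le_mul_of_nonneg_right h3 (Real.exp_pos _).le

lemma aux_A_nonneg {n p : ℕ} (X : Matrix (Fin n) (Fin p) ℝ) (π : Measure ℝ)
    (δ ε : ℝ) : 0 ≤ Afun X π δ ε := by
  apply Real.sInf_nonneg
  rintro _ ⟨t, _, rfl⟩
  positivity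

lemma aux_A_le {n p : ℕ} (X : Matrix (Fin n) (Fin p) ℝ) (π : Measure ℝ)
    (δ ε t : ℝ) (ht : 0 < t) : Afun X π δ ε ≤ Real.exp (-(δ * t)) *
    ∑ i, (Real.exp (ε * gbar X π i t) + Real.exp (ε * gbar X π i (-t))) := by
  apply csInf_le
  · refine ⟨0, ?_⟩
    rintro _ ⟨t, _, rfl⟩
    positivity
  · exact ⟨t, ht, rfl⟩

lemma aux_liminf (f : ℕ → ℝ) (c c₃ : ℝ) (h3 : 0 < c₃) (h : c₃ ≤ liminf f atTop)
    (hc : c < c₃) : ∀ᶠ n in atTop, c ≤ f n := by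
  rw [Filter.liminf_eq] at h
  have hne : {a | ∀ᶠ n in atTop, a ≤ f n}.Nonempty := by
    by_contra hn
    rw [Set.not_nonempty_iff_eq_empty] at hn
    rw [hn, Real.sSup_empty] at h
    linarith
  obtain ⟨b, hb, hcb⟩ := exists_lt_of_lt_csSup hne (hc.trans_le h)
  filter_upwards [hb] with n hn
  linarith

/-- Corollary 2 of the paper, the sparse case. If
`liminf [−log(ε_n N*_n(C)) / log p⁽ⁿ⁾] ≥ c₃ > 0`, the support of `π_n` is eventually
contained in `[−c₄ a_n, −a_n] ∪ [a_n, c₄ a_n]`, and `max_{i≠j} |C_ij| ≤ δ < c₃/(2c₄)`, then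
Condition F'' holds: `A_n(a_n/2, ε_n, ḡ⁽ⁿ⁾) → 0`. -/
theorem stmt_8 (p : ℕ → ℕ) (hp : Tendsto p atTop atTop)
    (X : ∀ n, Matrix (Fin n) (Fin (p n)) ℝ)
    (hcols : ∀ n j, ∑ i, (X n i j) ^ 2 = 1)
    (ε : ℕ → ℝ) (hε : ∀ n, ε n ∈ Set.Ioo (0 : ℝ) 1)
    (π : ℕ → Measure ℝ) (hπ : ∀ n, IsProbabilityMeasure (π n))
    (c₃ : ℝ) (hc₃ : 0 < c₃)
    (hliminf : c₃ ≤ Filter.liminf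
      (fun n => -Real.log (ε n * (Nstar (X n) : ℝ)) / Real.log (p n)) atTop)
    (a : ℕ → ℝ) (ha : ∀ n, 0 < a n) (c₄ : ℝ) (hc₄ : 1 ≤ c₄)
    (hsupp : ∀ᶠ n in atTop, ∀ᵐ u ∂(π n), a n ≤ |u| ∧ |u| ≤ c₄ * a n)
    (δ : ℝ) (hδ : 0 < δ)
    (hmax : ∀ n i j, i ≠ j → |((X n)ᵀ * X n) i j| ≤ δ)
    (hδc : δ < c₃ / (2 * c₄)) :
    Tendsto (fun n => Afun (X n) (π n) (a n / 2) (ε n)) atTop (𝓝 0) := by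
  have hc40 : 0 < c₄ := by linarith
  have hlt : 2 * (c₄ * δ) < c₃ := by
    rw [lt_div_iff₀ (by positivity)] at hδc
    linarith
  obtain ⟨c, hc1, hc2⟩ := exists_between hlt
  have hcd : 0 < c₄ * δ := by positivity
  have hc0 : 0 < c := by linarith
  obtain ⟨b, hb⟩ : ∃ b, b = c / (c₄ * δ) := ⟨_, rfl⟩
  have hb2 : 2 < b := by
    rw [hb, lt_div_iff₀ hcd]
    exact hc1
  have hbc : b * (c₄ * δ) = c := by
    rw [hb]
    field_simp
  have hL : Tendsto (fun n => Real.log (p n)) atTop atTop :=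
    Real.tendsto_log_atTop.comp (tendsto_natCast_atTop_atTop.comp hp)
  have hup : Tendsto (fun n => 2 * Real.exp 1 * Real.exp (-((b / 2 - 1) * Real.log (p n))))
      atTop (𝓝 0) := by
    have h1 : Tendsto (fun n => (b / 2 - 1) * Real.log (p n)) atTop atTop :=
      hL.const_mul_atTop (by linarith)
    have h2 := (Real.tendsto_exp_neg_atTop_nhds_zero.comp h1).const_mul (2 * Real.exp 1)
    simpa using h2
  refine tendsto_of_tendsto_of_tendsto_of_le_of_le' tendsto_const_nhds hup
    (Eventually.of_forall fun n => aux_A_nonneg _ _ _ _) ?_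
  filter_upwards [aux_liminf _ c c₃ hc₃ hliminf hc2, hsupp, hL.eventually_gt_atTop 0]
    with n h1 h2 h3
  haveI := hπ n
  have hp0 : (0 : ℝ) < p n := by
    rcases Nat.eq_zero_or_pos (p n) with h | h
    · rw [h] at h3
      simp at h3
    · exact_mod_cast h
  have hexpL : Real.exp (Real.log (p n)) = p n := Real.exp_log hp0
  generalize Real.log (p n) = L at *
  have hlog : Real.log (ε n * (Nstar (X n) : ℝ)) ≤ -(c * L) := by
    rw [le_div_iff₀ h3] at h1
    linarith
  have hN0 : (0 : ℝ) < Nstar (X n) := by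
    rcases Nat.eq_zero_or_pos (Nstar (X n)) with h | h
    · rw [h] at hlog
      simp only [Nat.cast_zero, mul_zero, Real.log_zero] at hlog
      nlinarith [mul_pos hc0 h3]
    · exact_mod_cast h
  have hεN : ε n * (Nstar (X n) : ℝ) ≤ Real.exp (-(c * L)) :=
    (Real.log_le_iff_le_exp (mul_pos (hε n).1 hN0)).1 hlog
  have hprod : ε n * ((Nstar (X n) : ℝ) * Real.exp (c * L)) ≤ 1 := by
    calc ε n * ((Nstar (X n) : ℝ) * Real.exp (c * L))
        = (ε n * (Nstar (X n) : ℝ)) * Real.exp (c * L) := by ring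
      _ ≤ Real.exp (-(c * L)) * Real.exp (c * L) := by gcongr
      _ = 1 := by rw [← Real.exp_add]; simp
  have han := ha n
  have ht : 0 < b * L / a n := by
    have : 0 < b := by linarith
    positivity
  have hM : ∀ᵐ u ∂(π n), |u| ≤ c₄ * a n := h2.mono fun u hu => hu.2
  have hbound : ∀ i, ∀ s : ℝ, |s| = b * L / a n →
      Real.exp (ε n * gbar (X n) (π n) i s) ≤ Real.exp 1 := by
    intro i s hs
    rw [Real.exp_le_exp]
    refine le_trans ?_ hprod
    refine mul_le_mul_of_nonneg_left ?_ (hε n).1.le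
    apply aux_gbar_le (X n) (π n) i s (c₄ * a n) δ (c * L) hM (hmax n)
    rw [hs, ← hbc]
    apply le_of_eq
    field_simp
  refine (aux_A_le (X n) (π n) (a n / 2) (ε n) _ ht).trans ?_
  have hsum : ∑ i, (Real.exp (ε n * gbar (X n) (π n) i (b * L / a n))
      + Real.exp (ε n * gbar (X n) (π n) i (-(b * L / a n)))) ≤ Real.exp L * (2 * Real.exp 1) := by
    rw [hexpL]
    refine (Finset.sum_le_card_nsmul Finset.univ _ (2 * Real.exp 1) ?_).trans ?_
    · intro i _
      have e1 := hbound i _ (abs_of_pos ht)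
      have e2 := hbound i (-(b * L / a n)) (by rw [abs_neg, abs_of_pos ht])
      linarith
    · simp
  have hat : a n / 2 * (b * L / a n) = b / 2 * L := by
    field_simp
  rw [hat]
  refine (mul_le_mul_of_nonneg_left hsum (Real.exp_pos _).le).trans (le_of_eq ?_)
  rw [← mul_assoc, ← Real.exp_add, mul_comm]
  congr 2
  ring
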